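/- Let C₄ > 1/2, M± = 2C₄ ± √(4C₄² − 1), G₋ = (1 − M₊²)/4 and G₊ = (1 − M₋²)/4 (so that G₋ < 0 < G₊), and for η ∈ (G₋, G₊) define F(η) = √((2η − 1)/2 + C₄·√(1 − 4η)) (the expression under the square root is positive on (G₋, G₊) and vanishes at the endpoints). Then ∫_{G₋}^{G₊} dη / ((1 − 4η)·F(η)) = π. -/

import Mathlib

/-- In terms of `m = √(1 - 4η)`, the radicand factors through the quadratic `m² - 4Cm + 1`. -/
lemma radicand_eq_quadratic (C : ℝ) {η : ℝ} (hη : 0 ≤ 1 - 4 * η) :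
    (2 * η - 1) / 2 + C * √(1 - 4 * η) =
      ((4 * C ^ 2 - 1) - (√(1 - 4 * η) - 2 * C) ^ 2) / 4 := by
  linear_combination (1 / 4) * Real.sq_sqrt hη

/-- A primitive of `η ↦ 1 / ((1 - 4η) F(η))`. -/
lemma hasDerivAt_arcsin_inv_sqrt {C s η : ℝ} (hs : 0 < s) (hs2 : s ^ 2 = 4 * C ^ 2 - 1)
    (hη : 0 < 1 - 4 * η) (hR : 0 < (2 * η - 1) / 2 + C * √(1 - 4 * η)) :
    HasDerivAt (fun x : ℝ => Real.arcsin (((√(1 - 4 * x))⁻¹ - 2 * C) / s))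
      (1 / ((1 - 4 * η) * √((2 * η - 1) / 2 + C * √(1 - 4 * η)))) η := by
  have hquad := radicand_eq_quadratic C hη.le
  have hm : 0 < √(1 - 4 * η) := Real.sqrt_pos.2 hη
  have hm2 : √(1 - 4 * η) ^ 2 = 1 - 4 * η := Real.sq_sqrt hη.le
  have hF : 0 < √((2 * η - 1) / 2 + C * √(1 - 4 * η)) := Real.sqrt_pos.2 hR
  have hF2 := Real.sq_sqrt hR.le
  have hlin : HasDerivAt (fun x : ℝ => 1 - 4 * x) (-4) η := by
    simpa using ((hasDerivAt_id η).const_mul (4 : ℝ)).const_sub 1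
  have hinner := (((hlin.sqrt hη.ne').inv hm.ne').sub_const (2 * C)).div_const s
  generalize √((2 * η - 1) / 2 + C * √(1 - 4 * η)) = F at *
  have hcomp : 1 - (((√(1 - 4 * η))⁻¹ - 2 * C) / s) ^ 2 = (2 * F / (√(1 - 4 * η) * s)) ^ 2 := by
    rw [hquad] at hF2
    generalize √(1 - 4 * η) = m at *
    field_simp
    linear_combination m ^ 2 * hs2 - 4 * hF2
  have hpos : 0 < 1 - (((√(1 - 4 * η))⁻¹ - 2 * C) / s) ^ 2 := by
    rw [hcomp]; positivity
  have habs := abs_lt.1 ((sq_lt_one_iff_abs_lt_one _).1 (sub_pos.1 hpos))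
  refine ((Real.hasDerivAt_arcsin habs.1.ne' habs.2.ne).comp η hinner).congr_deriv ?_
  rw [hcomp, Real.sqrt_sq (by positivity), ← hm2, Real.sqrt_sq hm.le]
  field_simp
  norm_num

/-- The period computation for the orbits of the `d = 4` characteristic system.
With `C₄ > 1/2`, `M± = 2C₄ ± √(4C₄² − 1)`, `G₋ = (1 − M₊²)/4 < 0 < G₊ = (1 − M₋²)/4`, and
`F(η) = √((2η − 1)/2 + C₄√(1 − 4η))` (positive inside `(G₋, G₊)` and vanishing at the
endpoints), one has `∫_{G₋}^{G₊} dη/((1 − 4η)F(η)) = π`. -/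
theorem half_period_integral_d4
    (C₄ : ℝ) (hC₄ : 1 / 2 < C₄)
    (Mp Mm Gm Gp : ℝ)
    (hMp : Mp = 2 * C₄ + Real.sqrt (4 * C₄ ^ 2 - 1))
    (hMm : Mm = 2 * C₄ - Real.sqrt (4 * C₄ ^ 2 - 1))
    (hGm : Gm = (1 - Mp ^ 2) / 4)
    (hGp : Gp = (1 - Mm ^ 2) / 4)
    (F : ℝ → ℝ)
    (hF : ∀ η, F η = Real.sqrt ((2 * η - 1) / 2 + C₄ * Real.sqrt (1 - 4 * η))) :
    Gm < 0 ∧ 0 < Gp ∧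
    (∀ η ∈ Set.Ioo Gm Gp, 0 < (2 * η - 1) / 2 + C₄ * Real.sqrt (1 - 4 * η)) ∧
    (2 * Gm - 1) / 2 + C₄ * Real.sqrt (1 - 4 * Gm) = 0 ∧
    (2 * Gp - 1) / 2 + C₄ * Real.sqrt (1 - 4 * Gp) = 0 ∧
    (∫ η in Gm..Gp, 1 / ((1 - 4 * η) * F η)) = Real.pi := by
  have hs2 : √(4 * C₄ ^ 2 - 1) ^ 2 = 4 * C₄ ^ 2 - 1 := Real.sq_sqrt (by nlinarith)
  have hs : 0 < √(4 * C₄ ^ 2 - 1) := Real.sqrt_pos.2 (by nlinarith)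
  generalize √(4 * C₄ ^ 2 - 1) = s at *
  have hprod : Mp * Mm = 1 := by
    rw [hMp, hMm]; linear_combination -hs2
  have hMp0 : 0 < Mp := by linarith
  have hMm0 : 0 < Mm := pos_of_mul_pos_right (hprod ▸ one_pos) hMp0.le
  have hlt : Mm < Mp := by linarith
  have hMp1 : 1 < Mp := by nlinarith
  have hMm1 : Mm < 1 := by nlinarith
  have hGm4 : 1 - 4 * Gm = Mp ^ 2 := by rw [hGm]; ring
  have hGp4 : 1 - 4 * Gp = Mm ^ 2 := by rw [hGp]; ring
  have hsqm : √(1 - 4 * Gm) = Mp := by rw [hGm4, Real.sqrt_sq hMp0.le]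
  have hsqp : √(1 - 4 * Gp) = Mm := by rw [hGp4, Real.sqrt_sq hMm0.le]
  have hGm0 : Gm < 0 := by nlinarith
  have hGp0 : 0 < Gp := by nlinarith
  have hbase : ∀ η ≤ Gp, 0 < 1 - 4 * η := fun η hη => by
    have := pow_pos hMm0 2
    linarith
  have hpos : ∀ η ∈ Set.Ioo Gm Gp, 0 < (2 * η - 1) / 2 + C₄ * √(1 - 4 * η) := by
    intro η hη
    have hη0 := hbase η hη.2.le
    have h1 : Mm < √(1 - 4 * η) := Real.lt_sqrt_of_sq_lt (by linarith [hη.2])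
    have h2 : √(1 - 4 * η) < Mp := (Real.sqrt_lt' hMp0).2 (by linarith [hη.1])
    rw [radicand_eq_quadratic C₄ hη0.le]
    nlinarith [mul_pos (sub_pos.2 h1) (sub_pos.2 h2)]
  refine ⟨hGm0, hGp0, hpos, ?_, ?_, ?_⟩
  · rw [radicand_eq_quadratic C₄ (hGm4 ▸ sq_nonneg Mp), hsqm, hMp]
    linear_combination -hs2 / 4
  · rw [radicand_eq_quadratic C₄ (hGp4 ▸ sq_nonneg Mm), hsqp, hMm]
    linear_combination -hs2 / 4
  have hle : Gm ≤ Gp := by linarith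
  simp only [hF]
  have hcont : ContinuousOn
      (fun x : ℝ => Real.arcsin (((√(1 - 4 * x))⁻¹ - 2 * C₄) / s)) (Set.Icc Gm Gp) := by
    refine Real.continuous_arcsin.comp_continuousOn ?_
    refine ContinuousOn.div_const (ContinuousOn.sub (ContinuousOn.inv₀ ?_ ?_) ?_) s
    · fun_prop
    · exact fun x hx => (Real.sqrt_pos.2 (hbase x hx.2)).ne'
    · fun_prop
  have hderiv := fun η (hη : η ∈ Set.Ioo Gm Gp) =>
    hasDerivAt_arcsin_inv_sqrt hs hs2 (hbase η hη.2.le) (hpos η hη)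
  have hint : IntervalIntegrable
      (fun η => 1 / ((1 - 4 * η) * √((2 * η - 1) / 2 + C₄ * √(1 - 4 * η))))
      MeasureTheory.volume Gm Gp := by
    refine (intervalIntegrable_iff_integrableOn_Ioc_of_le hle).2
      (intervalIntegral.integrableOn_deriv_of_nonneg hcont hderiv fun η hη => ?_)
    have := hbase η hη.2.le
    positivity
  rw [intervalIntegral.integral_eq_sub_of_hasDerivAt_of_le hle hcont hderiv hint, hsqm, hsqp,
    inv_eq_of_mul_eq_one_right hprod, inv_eq_of_mul_eq_one_left hprod]
  have hend : (Mp - 2 * C₄) / s = 1 := by rw [hMp]; field_simp; ring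
  have hstart : (Mm - 2 * C₄) / s = -1 := by rw [hMm]; field_simp; ring
  rw [hend, hstart, Real.arcsin_one, Real.arcsin_neg_one]
  ring
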